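/- arXiv:1909.10397 — 2 statements merged into one kernel-verified Lean document; each statement's English description precedes it below -/
import Mathlib

section
/- For every δ with 0 < δ < 1/4, the integral ∫_{0<s<s′<1} ∫_{0<z<z′<∞} (1−s)^{−1+δ} (1−s′)^{−1} s^{−1+2δ} (s′)^{−1} z^{−1/2−2δ} (z′−z)^{−1/2} exp( −z′² / ( s′² (1−s′) ) ) dz dz′ ds ds′ is finite. -/
open MeasureTheory Filter Set

/-
Since `z'² ≥ z² + (z' - z)²` for `0 < z < z'`, the Gaussian weight is at most a product of a weight
in `z` and a weight in `w = z' - z`, so the integral over `z < z'` is bounded by a product of two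
Gaussian moments, a constant times a power of `A = s'² (1 - s')`. Enlarging the triangle `s < s'`
to the unit square then leaves a product of two convergent Beta integrals.
-/

open scoped ENNReal

theorem lintegral_Ioi_rpow_mul_exp_neg_sq_div {A q : ℝ} (hA : 0 < A) (hq : -1 < q) :
    ∫⁻ x in Ioi (0 : ℝ), ENNReal.ofReal (x ^ q * Real.exp (-x ^ 2 / A)) =
      ENNReal.ofReal (Real.Gamma ((q + 1) / 2) / 2) * ENNReal.ofReal (A ^ ((q + 1) / 2)) := by
  have exponent_eq (x : ℝ) : -x ^ 2 / A = -A⁻¹ * x ^ 2 := by ring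
  have moment_eq : ∫ x in Ioi (0 : ℝ), x ^ q * Real.exp (-A⁻¹ * x ^ 2) =
      Real.Gamma ((q + 1) / 2) / 2 * A ^ ((q + 1) / 2) := by
    have h := integral_rpow_mul_exp_neg_mul_rpow two_pos hq (inv_pos.2 hA)
    simp_rw [Real.rpow_two] at h
    rw [h, Real.inv_rpow hA.le, ← Real.rpow_neg hA.le]
    ring_nf
  have integrand_nonneg : 0 ≤ᵐ[volume.restrict (Ioi (0 : ℝ))]
      fun x ↦ x ^ q * Real.exp (-A⁻¹ * x ^ 2) :=
    ae_restrict_of_forall_mem measurableSet_Ioi fun x hx ↦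
      mul_nonneg (Real.rpow_nonneg (le_of_lt hx) q) (Real.exp_pos _).le
  simp_rw [exponent_eq]
  rw [← ofReal_integral_eq_lintegral_ofReal
    (integrableOn_rpow_mul_exp_neg_mul_sq (inv_pos.2 hA) hq) integrand_nonneg, moment_eq,
    ENNReal.ofReal_mul' (Real.rpow_nonneg hA.le _)]

theorem lintegral_Ioi_comp_sub_right (f : ℝ → ℝ≥0∞) (a : ℝ) :
    ∫⁻ x in Ioi a, f (x - a) = ∫⁻ x in Ioi (0 : ℝ), f x := by
  rw [← (measurePreserving_sub_right volume a).setLIntegral_comp_preimage_emb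
    (MeasurableEquiv.subRight a).measurableEmbedding f (Ioi 0), preimage_sub_const_Ioi, zero_add]

theorem lintegral_Ioi_lintegral_Ioi_mul_comp_sub {f g : ℝ → ℝ≥0∞} (hf : Measurable f)
    (hg : Measurable g) (a : ℝ) :
    ∫⁻ x in Ioi a, ∫⁻ y in Ioi x, f x * g (y - x) =
      (∫⁻ x in Ioi a, f x) * ∫⁻ w in Ioi (0 : ℝ), g w := by
  have inner_eq (x : ℝ) :
      ∫⁻ y in Ioi x, f x * g (y - x) = f x * ∫⁻ w in Ioi (0 : ℝ), g w := by
    rw [lintegral_const_mul _ (by fun_prop), lintegral_Ioi_comp_sub_right]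
  simp_rw [inner_eq]
  exact lintegral_mul_const _ hf

theorem exp_neg_sq_div_le_mul {A x y : ℝ} (hA : 0 ≤ A) (hx : 0 ≤ x) (hxy : x ≤ y) :
    Real.exp (-y ^ 2 / A) ≤ Real.exp (-x ^ 2 / A) * Real.exp (-(y - x) ^ 2 / A) := by
  rw [← Real.exp_add, ← add_div]
  gcongr
  nlinarith [mul_nonneg hx (sub_nonneg.2 hxy)]

theorem lintegral_rpow_mul_sub_rpow_mul_exp_neg_sq_div_le {A p q : ℝ} (hA : 0 < A) (hp : -1 < p)
    (hq : -1 < q) :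
    ∫⁻ z in Ioi (0 : ℝ), ∫⁻ z' in Ioi z,
        ENNReal.ofReal (z ^ p * (z' - z) ^ q * Real.exp (-z' ^ 2 / A)) ≤
      ENNReal.ofReal (Real.Gamma ((p + 1) / 2) / 2) *
        ENNReal.ofReal (Real.Gamma ((q + 1) / 2) / 2) *
          ENNReal.ofReal (A ^ ((p + q + 2) / 2)) := by
  have integrand_le {z z' : ℝ} (hz : 0 < z) (hz' : z < z') :
      ENNReal.ofReal (z ^ p * (z' - z) ^ q * Real.exp (-z' ^ 2 / A)) ≤
        ENNReal.ofReal (z ^ p * Real.exp (-z ^ 2 / A)) *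
          ENNReal.ofReal ((z' - z) ^ q * Real.exp (-(z' - z) ^ 2 / A)) := by
    have : 0 < z' - z := sub_pos.2 hz'
    rw [← ENNReal.ofReal_mul (by positivity), mul_mul_mul_comm]
    gcongr
    exact exp_neg_sq_div_le_mul hA.le hz.le hz'.le
  calc
    _ ≤ ∫⁻ z in Ioi (0 : ℝ), ∫⁻ z' in Ioi z, ENNReal.ofReal (z ^ p * Real.exp (-z ^ 2 / A)) *
          ENNReal.ofReal ((z' - z) ^ q * Real.exp (-(z' - z) ^ 2 / A)) :=
      setLIntegral_mono' measurableSet_Ioi fun _ hz ↦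
        setLIntegral_mono' measurableSet_Ioi fun _ hz' ↦ integrand_le hz hz'
    _ = (∫⁻ z in Ioi (0 : ℝ), ENNReal.ofReal (z ^ p * Real.exp (-z ^ 2 / A))) *
          ∫⁻ w in Ioi (0 : ℝ), ENNReal.ofReal (w ^ q * Real.exp (-w ^ 2 / A)) :=
      lintegral_Ioi_lintegral_Ioi_mul_comp_sub
        (g := fun w ↦ ENNReal.ofReal (w ^ q * Real.exp (-w ^ 2 / A)))
        (by fun_prop) (by fun_prop) 0
    _ = _ := by
      rw [lintegral_Ioi_rpow_mul_exp_neg_sq_div hA hp, lintegral_Ioi_rpow_mul_exp_neg_sq_div hA hq,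
        mul_mul_mul_comm, ← ENNReal.ofReal_mul (Real.rpow_nonneg hA.le _), ← Real.rpow_add hA,
        show (p + 1) / 2 + (q + 1) / 2 = (p + q + 2) / 2 by ring]

theorem rpow_mul_one_sub_rpow_mul_sq_mul_one_sub_rpow {t : ℝ} (ht : t ∈ Ioo (0 : ℝ) 1)
    (c d r : ℝ) :
    t ^ c * (1 - t) ^ d * (t ^ 2 * (1 - t)) ^ r = t ^ (c + 2 * r) * (1 - t) ^ (d + r) := by
  have h1t : 0 < 1 - t := sub_pos.2 ht.2
  rw [Real.mul_rpow (sq_nonneg t) h1t.le, ← Real.rpow_natCast_mul ht.1.le, Nat.cast_ofNat,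
    mul_mul_mul_comm, ← Real.rpow_add ht.1, ← Real.rpow_add h1t]

theorem lintegral_rpow_mul_one_sub_rpow_mul_exp_neg_sq_div_le {c d p q t : ℝ} (hp : -1 < p)
    (hq : -1 < q) (ht : t ∈ Ioo (0 : ℝ) 1) :
    ∫⁻ z in Ioi (0 : ℝ), ∫⁻ z' in Ioi z,
        ENNReal.ofReal (t ^ c * (1 - t) ^ d *
          (z ^ p * (z' - z) ^ q * Real.exp (-z' ^ 2 / (t ^ 2 * (1 - t))))) ≤
      ENNReal.ofReal (Real.Gamma ((p + 1) / 2) / 2) *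
        ENNReal.ofReal (Real.Gamma ((q + 1) / 2) / 2) *
          ENNReal.ofReal (t ^ (c + (p + q + 2)) * (1 - t) ^ (d + (p + q + 2) / 2)) := by
  have ht0 : 0 < t := ht.1
  have h1t : 0 < 1 - t := sub_pos.2 ht.2
  have weight_nonneg : 0 ≤ t ^ c * (1 - t) ^ d := by positivity
  have power_eq : t ^ c * (1 - t) ^ d * (t ^ 2 * (1 - t)) ^ ((p + q + 2) / 2) =
      t ^ (c + (p + q + 2)) * (1 - t) ^ (d + (p + q + 2) / 2) := by
    rw [rpow_mul_one_sub_rpow_mul_sq_mul_one_sub_rpow ht, mul_div_cancel₀ _ two_ne_zero]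
  simp_rw [← power_eq, ENNReal.ofReal_mul weight_nonneg,
    lintegral_const_mul' _ _ ENNReal.ofReal_ne_top]
  rw [mul_left_comm]
  gcongr
  exact lintegral_rpow_mul_sub_rpow_mul_exp_neg_sq_div_le (by positivity) hp hq

theorem lintegral_rpow_mul_one_sub_rpow_lt_top {a b : ℝ} (ha : -1 < a) (hb : -1 < b) :
    ∫⁻ x in Ioo (0 : ℝ) 1, ENNReal.ofReal (x ^ a * (1 - x) ^ b) < ⊤ := by
  have ha' : 0 < a + 1 := neg_lt_iff_pos_add.1 ha
  have hb' : 0 < b + 1 := neg_lt_iff_pos_add.1 hb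
  have inv_beta_pos : 0 < 1 / ProbabilityTheory.beta (a + 1) (b + 1) :=
    one_div_pos.2 (ProbabilityTheory.beta_pos ha' hb')
  have normalized : ENNReal.ofReal (1 / ProbabilityTheory.beta (a + 1) (b + 1)) *
      ∫⁻ x in Ioo (0 : ℝ) 1, ENNReal.ofReal (x ^ a * (1 - x) ^ b) = 1 := by
    rw [← ProbabilityTheory.lintegral_betaPDF_eq_one ha' hb', ProbabilityTheory.lintegral_betaPDF,
      ← lintegral_const_mul' _ _ ENNReal.ofReal_ne_top]
    simp_rw [add_sub_cancel_right, mul_assoc, ENNReal.ofReal_mul inv_beta_pos.le]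
  exact ENNReal.lt_top_of_mul_ne_top_right (normalized ▸ ENNReal.one_ne_top)
    (ENNReal.ofReal_pos.2 inv_beta_pos).ne'

theorem lintegral_Ioo_lintegral_Ioo_mul_le {f g : ℝ → ℝ≥0∞} (hf : Measurable f)
    (hg : Measurable g) (a b : ℝ) :
    ∫⁻ x in Ioo a b, ∫⁻ y in Ioo x b, f x * g y ≤
      (∫⁻ x in Ioo a b, f x) * ∫⁻ y in Ioo a b, g y := by
  rw [← lintegral_mul_const _ hf]
  refine setLIntegral_mono' measurableSet_Ioo fun x hx ↦ ?_
  rw [lintegral_const_mul _ hg]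
  gcongr
  exact hx.1.le

theorem integral_delta_finite_general {a b c d p q : ℝ} (ha : -1 < a) (hb : -1 < b) (hp : -1 < p)
    (hq : -1 < q) (hc : -1 < c + (p + q + 2)) (hd : -1 < d + (p + q + 2) / 2) :
    (∫⁻ s in Ioo (0 : ℝ) 1, ∫⁻ s' in Ioo s 1, ∫⁻ z in Ioi (0 : ℝ), ∫⁻ z' in Ioi z,
      ENNReal.ofReal ((1 - s) ^ b * (1 - s') ^ d * s ^ a * s' ^ c * z ^ p * (z' - z) ^ q *
        Real.exp (-z' ^ 2 / (s' ^ 2 * (1 - s'))))) < ⊤ := by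
  set K : ℝ≥0∞ := ENNReal.ofReal (Real.Gamma ((p + 1) / 2) / 2) *
    ENNReal.ofReal (Real.Gamma ((q + 1) / 2) / 2)
  have hK : K < ⊤ := ENNReal.mul_lt_top ENNReal.ofReal_lt_top ENNReal.ofReal_lt_top
  let f (s : ℝ) : ℝ≥0∞ := ENNReal.ofReal (s ^ a * (1 - s) ^ b)
  let g (s' : ℝ) : ℝ≥0∞ :=
    ENNReal.ofReal (s' ^ (c + (p + q + 2)) * (1 - s') ^ (d + (p + q + 2) / 2))
  have inner_le {s s' : ℝ} (hs : s ∈ Ioo (0 : ℝ) 1) (hs' : s' ∈ Ioo (0 : ℝ) 1) :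
      ∫⁻ z in Ioi (0 : ℝ), ∫⁻ z' in Ioi z,
        ENNReal.ofReal ((1 - s) ^ b * (1 - s') ^ d * s ^ a * s' ^ c * z ^ p * (z' - z) ^ q *
          Real.exp (-z' ^ 2 / (s' ^ 2 * (1 - s')))) ≤ f s * (K * g s') := by
    have weight_nonneg : 0 ≤ s ^ a * (1 - s) ^ b :=
      mul_nonneg (Real.rpow_nonneg hs.1.le a) (Real.rpow_nonneg (sub_nonneg.2 hs.2.le) b)
    have integrand_eq (z z' : ℝ) :
        ENNReal.ofReal ((1 - s) ^ b * (1 - s') ^ d * s ^ a * s' ^ c * z ^ p * (z' - z) ^ q *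
          Real.exp (-z' ^ 2 / (s' ^ 2 * (1 - s')))) =
        f s * ENNReal.ofReal (s' ^ c * (1 - s') ^ d *
          (z ^ p * (z' - z) ^ q * Real.exp (-z' ^ 2 / (s' ^ 2 * (1 - s'))))) := by
      rw [← ENNReal.ofReal_mul weight_nonneg]
      ring_nf
    simp_rw [integrand_eq, lintegral_const_mul' (f s) _ ENNReal.ofReal_ne_top]
    gcongr
    exact lintegral_rpow_mul_one_sub_rpow_mul_exp_neg_sq_div_le hp hq hs'
  calc
    _ ≤ ∫⁻ s in Ioo (0 : ℝ) 1, ∫⁻ s' in Ioo s 1, f s * (K * g s') :=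
      setLIntegral_mono' measurableSet_Ioo fun s hs ↦
        setLIntegral_mono' measurableSet_Ioo fun s' hs' ↦ inner_le hs ⟨hs.1.trans hs'.1, hs'.2⟩
    _ ≤ (∫⁻ s in Ioo (0 : ℝ) 1, f s) * ∫⁻ s' in Ioo (0 : ℝ) 1, K * g s' :=
      lintegral_Ioo_lintegral_Ioo_mul_le (by fun_prop) (by fun_prop) 0 1
    _ = (∫⁻ s in Ioo (0 : ℝ) 1, f s) * (K * ∫⁻ s' in Ioo (0 : ℝ) 1, g s') := by
      rw [lintegral_const_mul' _ _ hK.ne]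
    _ < ⊤ := ENNReal.mul_lt_top (lintegral_rpow_mul_one_sub_rpow_lt_top ha hb)
      (ENNReal.mul_lt_top hK (lintegral_rpow_mul_one_sub_rpow_lt_top hc hd))

/-- For every `0 < δ < 1/4`, the integral
`∫_{0<s<s'<1} ∫_{0<z<z'<∞} (1-s)^{-1+δ} (1-s')⁻¹ s^{-1+2δ} s'⁻¹ z^{-1/2-2δ} (z'-z)^{-1/2}
  exp(-z'²/(s'²(1-s'))) dz dz' ds ds'` is finite. -/
theorem integral_delta_finite (δ : ℝ) (hδ0 : 0 < δ) (hδ : δ < 1/4) :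
    (∫⁻ s in Ioo (0:ℝ) 1, ∫⁻ s' in Ioo s 1, ∫⁻ z in Ioi (0:ℝ), ∫⁻ z' in Ioi z,
      ENNReal.ofReal ((1 - s) ^ (-1 + δ) * (1 - s')⁻¹ * s ^ (-1 + 2*δ) * s'⁻¹ *
        z ^ (-(1:ℝ)/2 - 2*δ) * (z' - z) ^ (-(1:ℝ)/2) *
        Real.exp (-z' ^ 2 / (s' ^ 2 * (1 - s'))))) < ⊤ := by
  simp_rw [← Real.rpow_neg_one]
  exact integral_delta_finite_general (by linarith) (by linarith) (by linarith) (by linarith)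
    (by linarith) (by linarith)
end

section
/- For every x ∈ ℝ and every r ∈ (0,1], one has lim_{t→∞} ∫₀ʳ ∫_ℝ | p_{1−s}( x/√t − y )² − p_{1−s}(y)² | · ( s |y| )^{−1/2} dy ds = 0. -/
open MeasureTheory Filter Set

/-- The one-dimensional heat kernel `p_t(x) = (2πt)^{-1/2} exp(-x²/(2t))`. -/
noncomputable def heatKernel (t x : ℝ) : ℝ :=
  (2 * Real.pi * t) ^ (-(1:ℝ)/2) * Real.exp (-x ^ 2 / (2 * t))

/-!
The square of `p_τ` is `(2πτ)⁻¹ G(y / √τ)` with `G(z) = exp(-z²)`, so rescaling `y = √τ z` turns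
the inner integral with weight `(s|y|)^β` into `(2π)⁻¹ s^β τ^{(β-1)/2} Φ(-a / √τ)`, where
`Φ(b) = ∫ |G(b + z) - G(z)| |z|^β dz` and `τ = 1 - s`. Splitting `|z|^β`, for `-1 < β ≤ 0`, into an
integrable part near `0` and a part bounded by `1` shows that `Φ` is bounded and tends to `0` at
`0`: the first part by dominated convergence, the second by continuity of translations in `L¹`.
Since `s^β (1-s)^{(β-1)/2}` is integrable on `(0, 1)`, dominated convergence concludes.
-/

open scoped Topology

section TranslationModulus

lemma norm_translate_sub_le_two_mul {G E : Type*} [Add G] [SeminormedAddCommGroup E] {g : G → E}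
    {M : ℝ} (hM : ∀ y, ‖g y‖ ≤ M) (b y : G) : ‖g (b + y) - g y‖ ≤ 2 * M :=
  (norm_sub_le _ _).trans (by linarith [hM (b + y), hM y])

variable {G E : Type*} [AddGroup G] [MeasurableSpace G] [NormedAddCommGroup E]
  {μ : Measure G} {w : G → ℝ} {g : G → E} {S : Set G} {M : ℝ}

/-- The weighted `L¹(w μ)` modulus of continuity of `g` under the left translation by `b`. It is
only meaningful where the integrand is integrable. -/
noncomputable def weightedTranslationModulus (μ : Measure G) (w : G → ℝ) (g : G → E) (b : G) : ℝ :=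
  ∫ y, ‖g (b + y) - g y‖ * w y ∂μ

lemma weightedTranslationModulus_nonneg (hw : ∀ y, 0 ≤ w y) (b : G) :
    0 ≤ weightedTranslationModulus μ w g b :=
  integral_nonneg fun y => mul_nonneg (norm_nonneg _) (hw y)

section LeftInvariant

variable [MeasurableAdd G] [μ.IsAddLeftInvariant]

lemma integrable_translate_sub (hg : Integrable g μ) (b : G) :
    Integrable (fun y => g (b + y) - g y) μ :=
  (hg.comp_add_left b).sub hg

lemma weightedTranslationModulus_one_le (hg : Integrable g μ) (b : G) :
    weightedTranslationModulus μ 1 g b ≤ 2 * ∫ y, ‖g y‖ ∂μ := by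
  have hgb : Integrable (fun y => g (b + y)) μ := hg.comp_add_left b
  calc weightedTranslationModulus μ 1 g b
      = ∫ y, ‖g (b + y) - g y‖ ∂μ := by simp [weightedTranslationModulus]
    _ ≤ ∫ y, (‖g (b + y)‖ + ‖g y‖) ∂μ :=
        integral_mono (hgb.sub hg).norm (hgb.norm.add hg.norm) fun y => norm_sub_le _ _
    _ = 2 * ∫ y, ‖g y‖ ∂μ := by
        rw [integral_add hgb.norm hg.norm, integral_add_left_eq_self (fun y => ‖g y‖) b, two_mul]

lemma integrableOn_norm_translate_sub_mul (hg : Integrable g μ) (hM : ∀ y, ‖g y‖ ≤ M)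
    (hwS : IntegrableOn w S μ) (b : G) :
    IntegrableOn (fun y => ‖g (b + y) - g y‖ * w y) S μ :=
  hwS.bdd_mul (c := 2 * M) (integrable_translate_sub hg b).norm.aestronglyMeasurable.restrict
    (ae_of_all _ fun y => by simpa using norm_translate_sub_le_two_mul hM b y)

lemma weightedTranslationModulus_restrict_le (hg : Integrable g μ) (hM : ∀ y, ‖g y‖ ≤ M)
    (hw : ∀ y, 0 ≤ w y) (hwS : IntegrableOn w S μ) (b : G) :
    weightedTranslationModulus (μ.restrict S) w g b ≤ 2 * M * ∫ y in S, w y ∂μ := by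
  rw [← integral_const_mul]
  exact integral_mono (integrableOn_norm_translate_sub_mul hg hM hwS b) (hwS.const_mul _)
    fun y => mul_le_mul_of_nonneg_right (norm_translate_sub_le_two_mul hM b y) (hw y)

lemma weightedTranslationModulus_le_restrict_add_one (hg : Integrable g μ) (hM : ∀ y, ‖g y‖ ≤ M)
    (hw : ∀ y, 0 ≤ w y) (hS : MeasurableSet S) (hwS : IntegrableOn w S μ)
    (hw1 : ∀ y ∉ S, w y ≤ 1) (b : G) :
    weightedTranslationModulus μ w g b ≤
      weightedTranslationModulus (μ.restrict S) w g b + weightedTranslationModulus μ 1 g b := by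
  have hnear : Integrable (S.indicator fun y => ‖g (b + y) - g y‖ * w y) μ :=
    (integrableOn_norm_translate_sub_mul hg hM hwS b).integrable_indicator hS
  have hfar : Integrable (fun y => ‖g (b + y) - g y‖ * (1 : G → ℝ) y) μ := by
    simpa using (integrable_translate_sub hg b).norm
  unfold weightedTranslationModulus
  rw [← integral_indicator hS, ← integral_add hnear hfar]
  refine integral_mono_of_nonneg (ae_of_all _ fun y => mul_nonneg (norm_nonneg _) (hw y))
    (hnear.add hfar) (ae_of_all _ fun y => ?_)
  by_cases hy : y ∈ S
  · simp [hy]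
  · simpa [hy] using mul_le_of_le_one_right (norm_nonneg _) (hw1 y hy)

lemma weightedTranslationModulus_le (hg : Integrable g μ) (hM : ∀ y, ‖g y‖ ≤ M)
    (hw : ∀ y, 0 ≤ w y) (hS : MeasurableSet S) (hwS : IntegrableOn w S μ)
    (hw1 : ∀ y ∉ S, w y ≤ 1) (b : G) :
    weightedTranslationModulus μ w g b ≤ 2 * M * (∫ y in S, w y ∂μ) + 2 * ∫ y, ‖g y‖ ∂μ :=
  (weightedTranslationModulus_le_restrict_add_one hg hM hw hS hwS hw1 b).trans <|
    add_le_add (weightedTranslationModulus_restrict_le hg hM hw hwS b)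
      (weightedTranslationModulus_one_le hg b)

end LeftInvariant

variable [TopologicalSpace G] [IsTopologicalAddGroup G] [BorelSpace G] [μ.IsAddLeftInvariant]

lemma tendsto_weightedTranslationModulus_one [IsLocallyFiniteMeasure μ]
    [μ.InnerRegularCompactLTTop] (hg : Integrable g μ) :
    Tendsto (weightedTranslationModulus μ 1 g) (𝓝 0) (𝓝 0) := by
  have : Fact ((1 : ENNReal) ≠ ⊤) := ⟨ENNReal.one_ne_top⟩
  have hcont : Continuous fun b : G => ‖(DomAddAct.mk b +ᵥ hg.toL1 g) - hg.toL1 g‖ := by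
    have : Continuous fun b : G => DomAddAct.mk b +ᵥ hg.toL1 g :=
      DomAddAct.continuous_mk.vadd continuous_const
    fun_prop
  have hnorm (b : G) :
      ‖(DomAddAct.mk b +ᵥ hg.toL1 g) - hg.toL1 g‖ = weightedTranslationModulus μ 1 g b := by
    have htranslate : DomAddAct.mk b +ᵥ hg.toL1 g = (hg.comp_add_left b).toL1 _ := rfl
    rw [htranslate, ← Integrable.toL1_sub, L1.norm_of_fun_eq_integral_norm]
    simp [weightedTranslationModulus]
  simp_rw [hnorm] at hcont
  have hzero : weightedTranslationModulus μ 1 g 0 = 0 := by simp [weightedTranslationModulus]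
  simpa only [hzero] using hcont.tendsto 0

lemma tendsto_weightedTranslationModulus_of_integrableOn [FirstCountableTopology G]
    (hg : Integrable g μ) (hgc : Continuous g) (hM : ∀ y, ‖g y‖ ≤ M) (hw : ∀ y, 0 ≤ w y)
    (hwS : IntegrableOn w S μ) :
    Tendsto (weightedTranslationModulus (μ.restrict S) w g) (𝓝 0) (𝓝 0) := by
  rw [← integral_zero G ℝ (μ := μ.restrict S)]
  refine tendsto_integral_filter_of_dominated_convergence (fun y => 2 * M * w y)
    (Eventually.of_forall fun b =>
      (integrableOn_norm_translate_sub_mul hg hM hwS b).aestronglyMeasurable)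
    (Eventually.of_forall fun b => ae_of_all _ fun y => ?_) (hwS.const_mul _)
    (ae_of_all _ fun y => ?_)
  · rw [Real.norm_of_nonneg (mul_nonneg (norm_nonneg _) (hw y))]
    exact mul_le_mul_of_nonneg_right (norm_translate_sub_le_two_mul hM b y) (hw y)
  · have hcont : Continuous fun b => ‖g (b + y) - g y‖ * w y := by fun_prop
    simpa using hcont.tendsto 0

lemma tendsto_weightedTranslationModulus [FirstCountableTopology G] [IsLocallyFiniteMeasure μ]
    [μ.InnerRegularCompactLTTop] (hg : Integrable g μ) (hgc : Continuous g)
    (hM : ∀ y, ‖g y‖ ≤ M) (hw : ∀ y, 0 ≤ w y) (hS : MeasurableSet S)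
    (hwS : IntegrableOn w S μ) (hw1 : ∀ y ∉ S, w y ≤ 1) :
    Tendsto (weightedTranslationModulus μ w g) (𝓝 0) (𝓝 0) := by
  refine squeeze_zero (weightedTranslationModulus_nonneg hw)
    (weightedTranslationModulus_le_restrict_add_one hg hM hw hS hwS hw1) ?_
  simpa using (tendsto_weightedTranslationModulus_of_integrableOn hg hgc hM hw hwS).add
    (tendsto_weightedTranslationModulus_one hg)

end TranslationModulus

section PowerWeights

lemma intervalIntegrable_abs_rpow {β : ℝ} (hβ : -1 < β) (a b : ℝ) :
    IntervalIntegrable (fun y : ℝ => |y| ^ β) volume a b :=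
  intervalIntegrable_of_even (fun y => by rw [abs_neg]) fun t ht =>
    (intervalIntegral.intervalIntegrable_rpow' hβ).congr fun y hy => by
      rw [uIoc_of_le ht.le] at hy
      rw [abs_of_pos hy.1]

lemma integrableOn_abs_rpow_Icc {β : ℝ} (hβ : -1 < β) :
    IntegrableOn (fun y : ℝ => |y| ^ β) (Icc (-1) 1) :=
  (intervalIntegrable_iff_integrableOn_Icc_of_le (by norm_num)).1
    (intervalIntegrable_abs_rpow hβ (-1) 1)

lemma abs_rpow_le_one_of_notMem_Icc {β y : ℝ} (hβ : β ≤ 0) (hy : y ∉ Icc (-1 : ℝ) 1) :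
    |y| ^ β ≤ 1 :=
  Real.rpow_le_one_of_one_le_of_nonpos (not_le.1 fun h => hy (abs_le.1 h)).le hβ

lemma weightedTranslationModulus_abs_rpow_comp_div {E : Type*} [NormedAddCommGroup E] (g : ℝ → E)
    (β b : ℝ) {c : ℝ} (hc : 0 < c) :
    weightedTranslationModulus volume (fun y : ℝ => |y| ^ β) (fun y => g (y / c)) b =
      c ^ (β + 1) * weightedTranslationModulus volume (fun y : ℝ => |y| ^ β) g (b / c) := by
  have hscale (y : ℝ) : ‖g ((b + y) / c) - g (y / c)‖ * |y| ^ β =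
      c ^ β * (‖g (b / c + y / c) - g (y / c)‖ * |y / c| ^ β) := by
    rw [add_div, abs_div, abs_of_pos hc, Real.div_rpow (abs_nonneg y) hc.le]
    field_simp
  simp only [weightedTranslationModulus, hscale]
  rw [integral_const_mul,
    Measure.integral_comp_div (fun z => ‖g (b / c + z) - g z‖ * |z| ^ β) c, abs_of_pos hc,
    smul_eq_mul, Real.rpow_add_one hc.ne', mul_assoc]

lemma integrableOn_rpow_mul_one_sub_rpow {u v : ℝ} (hu : -1 < u) (hv : -1 < v) :
    IntegrableOn (fun s : ℝ => s ^ u * (1 - s) ^ v) (Ioo 0 1) := by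
  have hbeta := (intervalIntegrable_iff_integrableOn_Ioo_of_le zero_le_one).1
    (Complex.betaIntegral_convergent (u := ((u + 1 : ℝ) : ℂ)) (v := ((v + 1 : ℝ) : ℂ))
      (by simpa using by linarith) (by simpa using by linarith))
  refine hbeta.norm.congr ((ae_restrict_mem measurableSet_Ioo).mono fun s hs => ?_)
  have hsub : (1 : ℂ) - s = (1 - s : ℝ) := by push_cast; rfl
  simp only [norm_mul, hsub]
  rw [Complex.norm_cpow_eq_rpow_re_of_pos hs.1,
    Complex.norm_cpow_eq_rpow_re_of_pos (sub_pos.2 hs.2)]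
  simp

end PowerWeights

section HeatKernel

lemma heatKernel_sq {τ : ℝ} (hτ : 0 < τ) (y : ℝ) :
    heatKernel τ y ^ 2 = (2 * Real.pi * τ)⁻¹ * Real.exp (-(y / √τ) ^ 2) := by
  have hpos : 0 ≤ 2 * Real.pi * τ := by positivity
  rw [heatKernel, mul_pow, ← Real.rpow_mul_natCast hpos, ← Real.exp_nat_mul, div_pow,
    Real.sq_sqrt hτ.le, ← Real.rpow_neg_one]
  congr 2
  · norm_num
  · push_cast
    field_simp

lemma integrable_exp_neg_sq : Integrable fun z : ℝ => Real.exp (-z ^ 2) := by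
  simpa using integrable_exp_neg_mul_sq one_pos

lemma norm_exp_neg_sq_le_one (z : ℝ) : ‖Real.exp (-z ^ 2)‖ ≤ 1 := by
  simpa using sq_nonneg z

/-- The function `Φ(b) = ∫ |exp(-(b + z)²) - exp(-z²)| |z|^β dz`, which governs the inner integral
after parabolic rescaling. -/
noncomputable def gaussianModulus (β : ℝ) : ℝ → ℝ :=
  weightedTranslationModulus volume (fun z : ℝ => |z| ^ β) fun z => Real.exp (-z ^ 2)

variable {β : ℝ}

lemma exists_forall_gaussianModulus_le (hβ : -1 < β) (hβ0 : β ≤ 0) :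
    ∃ K, ∀ b, gaussianModulus β b ≤ K :=
  ⟨_, weightedTranslationModulus_le integrable_exp_neg_sq norm_exp_neg_sq_le_one
    (fun _ => by positivity) measurableSet_Icc (integrableOn_abs_rpow_Icc hβ)
    fun _ => abs_rpow_le_one_of_notMem_Icc hβ0⟩

lemma tendsto_gaussianModulus (hβ : -1 < β) (hβ0 : β ≤ 0) :
    Tendsto (gaussianModulus β) (𝓝 0) (𝓝 0) :=
  tendsto_weightedTranslationModulus integrable_exp_neg_sq (by fun_prop) norm_exp_neg_sq_le_one
    (fun _ => by positivity) measurableSet_Icc (integrableOn_abs_rpow_Icc hβ)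
    fun _ => abs_rpow_le_one_of_notMem_Icc hβ0

lemma integral_abs_heatKernel_sq_sub (β a : ℝ) {τ s : ℝ} (hτ : 0 < τ) (hs : 0 ≤ s) :
    ∫ y : ℝ, |heatKernel τ (a - y) ^ 2 - heatKernel τ y ^ 2| * (s * |y|) ^ β =
      (2 * Real.pi)⁻¹ * (s ^ β * τ ^ ((β - 1) / 2)) * gaussianModulus β (-a / √τ) := by
  have hintegrand (y : ℝ) :
      |heatKernel τ (a - y) ^ 2 - heatKernel τ y ^ 2| * (s * |y|) ^ β =
        (2 * Real.pi * τ)⁻¹ * s ^ β *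
          (‖Real.exp (-((-a + y) / √τ) ^ 2) - Real.exp (-(y / √τ) ^ 2)‖ * |y| ^ β) := by
    have heven : ((a - y) / √τ) ^ 2 = ((-a + y) / √τ) ^ 2 := by ring
    rw [heatKernel_sq hτ, heatKernel_sq hτ, ← mul_sub, abs_mul, abs_of_pos (by positivity),
      Real.mul_rpow hs (abs_nonneg y), Real.norm_eq_abs, heven]
    ring
  have hτpow : τ ^ ((β - 1) / 2) = τ⁻¹ * √τ ^ (β + 1) := by
    rw [Real.sqrt_eq_rpow, ← Real.rpow_mul hτ.le, ← Real.rpow_neg_one, ← Real.rpow_add hτ]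
    ring_nf
  have hscale : ∫ y : ℝ,
      ‖Real.exp (-((-a + y) / √τ) ^ 2) - Real.exp (-(y / √τ) ^ 2)‖ * |y| ^ β =
        √τ ^ (β + 1) * gaussianModulus β (-a / √τ) :=
    weightedTranslationModulus_abs_rpow_comp_div
      (fun z : ℝ => Real.exp (-z ^ 2)) β (-a) (Real.sqrt_pos.2 hτ)
  simp_rw [hintegrand]
  rw [integral_const_mul, hscale, hτpow, mul_inv]
  ring

lemma aestronglyMeasurable_integral_abs_heatKernel_sq_sub (β a : ℝ) (ν : Measure ℝ) :
    AEStronglyMeasurable (fun s : ℝ => ∫ y : ℝ,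
      |heatKernel (1 - s) (a - y) ^ 2 - heatKernel (1 - s) y ^ 2| * (s * |y|) ^ β) ν := by
  refine (StronglyMeasurable.integral_prod_right (Measurable.stronglyMeasurable ?_))
    |>.aestronglyMeasurable
  unfold heatKernel Function.uncurry
  fun_prop

lemma tendsto_integral_abs_heatKernel_sq_sub (hβ : -1 < β) (hβ0 : β ≤ 0) {τ s : ℝ} (hτ : 0 < τ)
    (hs : 0 ≤ s) :
    Tendsto (fun a : ℝ => ∫ y : ℝ,
        |heatKernel τ (a - y) ^ 2 - heatKernel τ y ^ 2| * (s * |y|) ^ β) (𝓝 0) (𝓝 0) := by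
  simp_rw [integral_abs_heatKernel_sq_sub β _ hτ hs]
  have hshift : Tendsto (fun a : ℝ => -a / √τ) (𝓝 0) (𝓝 0) := by
    simpa using (continuous_neg.div_const √τ).tendsto 0
  simpa using ((tendsto_gaussianModulus hβ hβ0).comp hshift).const_mul
    ((2 * Real.pi)⁻¹ * (s ^ β * τ ^ ((β - 1) / 2)))

theorem tendsto_integral_abs_diff_general (hβ : -1 < β) (hβ0 : β ≤ 0) {r : ℝ} (hr1 : r ≤ 1) :
    Tendsto (fun a : ℝ => ∫ s in Ioo (0 : ℝ) r, ∫ y : ℝ,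
        |heatKernel (1 - s) (a - y) ^ 2 - heatKernel (1 - s) y ^ 2| * (s * |y|) ^ β)
      (𝓝 0) (𝓝 0) := by
  obtain ⟨K, hK⟩ := exists_forall_gaussianModulus_le hβ hβ0
  have hdominated : IntegrableOn
      (fun s : ℝ => (2 * Real.pi)⁻¹ * (s ^ β * (1 - s) ^ ((β - 1) / 2)) * K) (Ioo 0 r) :=
    (((integrableOn_rpow_mul_one_sub_rpow hβ (by linarith)).mono_set
      (Ioo_subset_Ioo_right hr1)).const_mul _).mul_const K
  have hbound (a : ℝ) : ∀ᵐ s ∂volume.restrict (Ioo 0 r),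
      ‖∫ y : ℝ, |heatKernel (1 - s) (a - y) ^ 2 - heatKernel (1 - s) y ^ 2| * (s * |y|) ^ β‖ ≤
        (2 * Real.pi)⁻¹ * (s ^ β * (1 - s) ^ ((β - 1) / 2)) * K := by
    filter_upwards [ae_restrict_mem measurableSet_Ioo] with s ⟨hs0, hsr⟩
    have hτ : 0 < 1 - s := by linarith
    rw [Real.norm_of_nonneg (integral_nonneg fun y => by positivity),
      integral_abs_heatKernel_sq_sub β a hτ hs0.le]
    gcongr
    exact hK _
  have hlim : ∀ᵐ s ∂volume.restrict (Ioo 0 r), Tendsto (fun a : ℝ => ∫ y : ℝ,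
      |heatKernel (1 - s) (a - y) ^ 2 - heatKernel (1 - s) y ^ 2| * (s * |y|) ^ β)
        (𝓝 0) (𝓝 0) := by
    filter_upwards [ae_restrict_mem measurableSet_Ioo] with s ⟨hs0, hsr⟩
    exact tendsto_integral_abs_heatKernel_sq_sub hβ hβ0 (by linarith) hs0.le
  simpa only [integral_zero] using tendsto_integral_filter_of_dominated_convergence _
    (Eventually.of_forall fun a => aestronglyMeasurable_integral_abs_heatKernel_sq_sub β a _)
    (Eventually.of_forall hbound) hdominated hlim

end HeatKernel

/-- For every `x ∈ ℝ` and `r ∈ (0,1]`,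
`lim_{t→∞} ∫₀ʳ ∫_ℝ |p_{1-s}(x/√t - y)² - p_{1-s}(y)²| (s|y|)^{-1/2} dy ds = 0`. -/
theorem tendsto_integral_abs_diff (x r : ℝ) (hr0 : 0 < r) (hr1 : r ≤ 1) :
    Tendsto (fun t : ℝ => ∫ s in Ioo (0:ℝ) r, ∫ y : ℝ,
        |heatKernel (1 - s) (x / Real.sqrt t - y) ^ 2 - heatKernel (1 - s) y ^ 2| *
          (s * |y|) ^ (-(1:ℝ)/2))
      atTop (nhds 0) :=
  (tendsto_integral_abs_diff_general (by norm_num) (by norm_num) hr1).comp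
    ((tendsto_const_nhds (x := x)).div_atTop Real.tendsto_sqrt_atTop)
end
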